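/- For a finite nilpotent group G, e(G) ≤ d(G) + 2.1185, where d(G) is the minimal number of generators of G and e(G) the expected number of uniformly random elements needed to generate G. Consequently, for every g ∈ G, e(G) - e(G,g) ≤ 3.1185. -/

import Mathlib

open Subgroup

noncomputable def genProb (G : Type*) [Group G] (Y : Set G) (n : ℕ) : ℝ :=
  (Nat.card {v : Fin n → G // Subgroup.closure (Y ∪ Set.range v) = ⊤} : ℝ) /
    (Nat.card G : ℝ) ^ n

noncomputable def eTime (G : Type*) [Group G] (Y : Set G) : ℝ :=
  ∑' n : ℕ, (1 - genProb G Y n)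

/-- `d(G)`: the minimal number of generators of `G`. -/
noncomputable def dMin (G : Type*) [Group G] : ℕ :=
  sInf {n : ℕ | ∃ S : Finset G, S.card = n ∧ Subgroup.closure (S : Set G) = ⊤}

/-!
A maximal subgroup of a finite nilpotent group `G` is normal of prime index, so elements generate
`G` as soon as, for every prime `p` dividing `|G|`, no nonzero homomorphism `G → 𝔽_p` kills them
all, i.e. as soon as their images span the largest elementary abelian `p`-quotient of `G`, whose
rank is at most `d(G)`. These quotients have coprime orders, so the events for different `p` are
independent, and `n = d(G) + k` random elements generate `G` with probability at least
`∏_p ∏_{j > k} (1 - p⁻ʲ) = ∏_{j > k} ζ(j)⁻¹`. Bounding `1 - P(n)` by `1` for `n ≤ d(G)` and by this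
estimate afterwards gives `e(G) ≤ d(G) + 1 + ∑_{k ≥ 1} (1 - ∏_{j > k} ζ(j)⁻¹)`, and the sum is at
most `1.1185`. Fewer than `d(G) - 1` elements never generate `G` together with `g`, so
`e(G, g) ≥ d(G) - 1`.
-/

section Zeta

/-- The zeta value `ζ(j)`, as a real number; it has the junk value `0` for `j ≤ 1`. -/
noncomputable def realZeta (j : ℕ) : ℝ := ∑' n : ℕ, 1 / (n : ℝ) ^ j

lemma realZeta_eq_one_add_tsum {j : ℕ} (hj : 2 ≤ j) :
    realZeta j = 1 + ∑' n : ℕ, 1 / ((n : ℝ) + 2) ^ j := by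
  rw [realZeta, ← (Real.summable_one_div_nat_pow.2 hj).sum_add_tsum_nat_add 2]
  simp [Finset.sum_range_succ, show j ≠ 0 by omega]

lemma one_le_realZeta {j : ℕ} (hj : 2 ≤ j) : 1 ≤ realZeta j := by
  rw [realZeta_eq_one_add_tsum hj]
  exact le_add_of_nonneg_right (tsum_nonneg fun n => by positivity)

lemma realZeta_succ_sub_one_le {j : ℕ} (hj : 2 ≤ j) :
    realZeta (j + 1) - 1 ≤ (realZeta j - 1) / 2 := by
  have summable_tail {i : ℕ} (hi : 2 ≤ i) : Summable fun n : ℕ => 1 / ((n : ℝ) + 2) ^ i := by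
    simpa using (summable_nat_add_iff 2).2 (Real.summable_one_div_nat_pow.2 hi)
  rw [realZeta_eq_one_add_tsum hj, realZeta_eq_one_add_tsum (by omega), add_sub_cancel_left,
    add_sub_cancel_left, ← tsum_div_const]
  refine Summable.tsum_le_tsum (fun n => ?_) (summable_tail (by omega))
    ((summable_tail hj).div_const 2)
  rw [pow_succ, div_div]
  gcongr
  linarith [n.cast_nonneg (α := ℝ)]

lemma realZeta_add_sub_one_le {j : ℕ} (hj : 2 ≤ j) (m : ℕ) :
    realZeta (j + m) - 1 ≤ (realZeta j - 1) * (1 / 2) ^ m := by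
  induction m with
  | zero => simp
  | succ m ih =>
    have half : realZeta (j + m + 1) - 1 ≤ (realZeta (j + m) - 1) / 2 :=
      realZeta_succ_sub_one_le (by omega)
    rw [← add_assoc, pow_succ]
    linarith

lemma summable_realZeta_add_sub_one {k : ℕ} (hk : 2 ≤ k) :
    Summable fun i => realZeta (k + i) - 1 :=
  .of_nonneg_of_le (fun i => sub_nonneg.2 (one_le_realZeta (by omega)))
    (realZeta_add_sub_one_le hk) (summable_geometric_two.mul_left _)

lemma tsum_realZeta_add_sub_one_le {k : ℕ} (hk : 2 ≤ k) :
    ∑' i, (realZeta (k + i) - 1) ≤ 2 * (realZeta k - 1) := by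
  calc ∑' i, (realZeta (k + i) - 1)
      ≤ ∑' i, (realZeta k - 1) * (1 / 2 : ℝ) ^ i :=
        (summable_realZeta_add_sub_one hk).tsum_le_tsum (realZeta_add_sub_one_le hk)
          (summable_geometric_two.mul_left _)
    _ = 2 * (realZeta k - 1) := by rw [tsum_mul_left, tsum_geometric_two, mul_comm]

lemma succ_mul_pow_le_add_half_pow_sub_sub_half_pow {y : ℝ} (hy : 1 / 2 ≤ y) (a : ℕ) :
    (a + 1) * y ^ a ≤ (y + 1 / 2) ^ (a + 1) - (y - 1 / 2) ^ (a + 1) := by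
  induction a with
  | zero => norm_num
  | succ a ih =>
    have midpoint : y ^ (a + 1) ≤ ((y + 1 / 2) ^ (a + 1) + (y - 1 / 2) ^ (a + 1)) / 2 := by
      have mean := add_pow_le (a := y + 1 / 2) (b := y - 1 / 2) (by linarith) (by linarith) (a + 1)
      rw [add_add_sub_cancel, ← two_mul, mul_pow, pow_succ', mul_assoc, Nat.add_sub_cancel,
        mul_left_comm] at mean
      linarith [le_of_mul_le_mul_left mean (by positivity)]
    have scaled := mul_le_mul_of_nonneg_left ih (show 0 ≤ y by linarith)
    push_cast
    ring_nf at scaled midpoint ⊢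
    linarith

-- The midpoint rule bounds the integral of the convex function `x ↦ x⁻⁽ᵃ⁺¹⁾` over an interval of
-- length one around `y` from below.
lemma mul_one_div_pow_succ_le {y : ℝ} (hy : 1 / 2 < y) {a : ℕ} (ha : 1 ≤ a) :
    a * (1 / y ^ (a + 1)) ≤ 1 / (y - 1 / 2) ^ a - 1 / (y + 1 / 2) ^ a := by
  obtain ⟨b, rfl⟩ := Nat.exists_eq_add_of_le' ha
  have : 0 < y := by linarith
  have : 0 < y - 1 / 2 := by linarith
  have gap := succ_mul_pow_le_add_half_pow_sub_sub_half_pow hy.le b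
  calc ((b + 1 : ℕ) : ℝ) * (1 / y ^ (b + 1 + 1))
      = ((b + 1) * y ^ b) / (y * y) ^ (b + 1) := by
        push_cast
        field_simp
        ring
    _ ≤ ((y + 1 / 2) ^ (b + 1) - (y - 1 / 2) ^ (b + 1)) /
          ((y - 1 / 2) * (y + 1 / 2)) ^ (b + 1) := by
        refine div_le_div₀ (le_trans (by positivity) gap) gap (by positivity) ?_
        gcongr 1
        nlinarith
    _ = 1 / (y - 1 / 2) ^ (b + 1) - 1 / (y + 1 / 2) ^ (b + 1) := by
        rw [mul_pow, div_sub_div _ _ (by positivity) (by positivity), one_mul, mul_one]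

lemma realZeta_succ_le {a : ℕ} (ha : 1 ≤ a) (N : ℕ) :
    realZeta (a + 1) ≤
      ∑ n ∈ Finset.range (N + 1), 1 / (n : ℝ) ^ (a + 1) + 1 / (a * (N + 1 / 2) ^ a) := by
  have ha0 : (0 : ℝ) < a := by exact_mod_cast ha
  rw [realZeta, ← (Real.summable_one_div_nat_pow.2 (by omega)).sum_add_tsum_nat_add (N + 1)]
  gcongr
  refine Real.tsum_le_of_sum_range_le (fun n => by positivity) fun M => ?_
  let g : ℕ → ℝ := fun i => 1 / (i + N + 1 / 2) ^ a
  have term_le (i : ℕ) : a * (1 / ((i + (N + 1) : ℕ) : ℝ) ^ (a + 1)) ≤ g i - g (i + 1) := by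
    refine (mul_one_div_pow_succ_le ?_ ha).trans_eq ?_
    · push_cast
      linarith [i.cast_nonneg (α := ℝ), N.cast_nonneg (α := ℝ)]
    · simp only [g]
      push_cast
      ring_nf
  have telescope := Finset.sum_le_sum fun i (_ : i ∈ Finset.range M) => term_le i
  rw [← Finset.mul_sum, Finset.sum_range_sub'] at telescope
  rw [mul_comm (a : ℝ), ← div_div, le_div_iff₀' ha0]
  refine telescope.trans ((sub_le_self _ (by positivity)).trans_eq ?_)
  simp [g]

lemma inv_realZeta_le_prod_one_sub {s : Finset ℕ} (hs : ∀ p ∈ s, p.Prime) {j : ℕ} (hj : 2 ≤ j) :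
    (realZeta j)⁻¹ ≤ ∏ p ∈ s, (1 - 1 / (p : ℝ) ^ j) := by
  let f : ℕ →* ℝ :=
    { toFun n := 1 / (n : ℝ) ^ j
      map_one' := by simp
      map_mul' a b := by simp [mul_pow, mul_comm] }
  have hsum : Summable f := Real.summable_one_div_nat_pow.2 hj
  have euler := EulerProduct.prod_filter_prime_geometric_eq_tsum_factoredNumbers hsum s
  rw [Finset.filter_true_of_mem hs, Finset.prod_inv_distrib] at euler
  have factored_le : ∑' m : Nat.factoredNumbers s, f m ≤ realZeta j :=
    hsum.tsum_subtype_le f _ fun n => show 0 ≤ 1 / (n : ℝ) ^ j by positivity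
  have hpos : 0 < ∏ p ∈ s, (1 - f p) := Finset.prod_pos fun p hp => by
    have hp1 : (1 : ℝ) < p := by exact_mod_cast (hs p hp).one_lt
    exact sub_pos.2 ((div_lt_one (by positivity)).2 (one_lt_pow₀ hp1 (by omega)))
  exact inv_le_of_inv_le₀ hpos (euler.trans_le factored_le)

end Zeta

section InvZetaProd

/-- The infinite product `∏_{j ≥ k} ζ(j)⁻¹`, meaningful for `k ≥ 2`. It bounds from below the
probability that `d(G) + k - 1` elements generate a finite nilpotent group `G`. -/
noncomputable def invZetaProd (k : ℕ) : ℝ := ∏' i, (realZeta (k + i))⁻¹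

lemma one_sub_sum_le_prod_inv_one_add {ι : Type*} (s : Finset ι) {a : ι → ℝ}
    (ha : ∀ i ∈ s, 0 ≤ a i) : 1 - ∑ i ∈ s, a i ≤ ∏ i ∈ s, (1 + a i)⁻¹ := by
  have prod_le : ∏ i ∈ s, (1 + a i) ≤ Real.exp (∑ i ∈ s, a i) := by
    rw [Real.exp_sum]
    exact Finset.prod_le_prod (fun i hi => by linarith [ha i hi])
      fun i _ => by linarith [Real.add_one_le_exp (a i)]
  have prod_pos : 0 < ∏ i ∈ s, (1 + a i) := Finset.prod_pos fun i hi => by linarith [ha i hi]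
  calc 1 - ∑ i ∈ s, a i ≤ Real.exp (-∑ i ∈ s, a i) := Real.one_sub_le_exp_neg _
    _ = (Real.exp (∑ i ∈ s, a i))⁻¹ := Real.exp_neg _
    _ ≤ (∏ i ∈ s, (1 + a i))⁻¹ := inv_anti₀ prod_pos prod_le
    _ = ∏ i ∈ s, (1 + a i)⁻¹ := Finset.prod_inv_distrib _ |>.symm

variable {k : ℕ}

lemma multipliable_inv_realZeta_add (hk : 2 ≤ k) : Multipliable fun i => (realZeta (k + i))⁻¹ := by
  have summable_log : Summable fun i => Real.log (realZeta (k + i)) :=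
    (Real.summable_log_one_add_of_summable (summable_realZeta_add_sub_one hk)).congr
      fun i => by rw [add_sub_cancel]
  refine Real.multipliable_of_summable_log (fun i => ?_) (by simpa using summable_log.neg)
  exact inv_pos.2 (one_pos.trans_le (one_le_realZeta (by omega)))

lemma invZetaProd_le_prod_range (hk : 2 ≤ k) (m : ℕ) :
    invZetaProd k ≤ ∏ i ∈ Finset.range m, (realZeta (k + i))⁻¹ := by
  have hone (i : ℕ) : 1 ≤ realZeta (k + i) := one_le_realZeta (by omega)
  have anti : Antitone fun m => ∏ i ∈ Finset.range m, (realZeta (k + i))⁻¹ :=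
    antitone_nat_of_succ_le fun m => by
      rw [Finset.prod_range_succ]
      exact mul_le_of_le_one_right
        (Finset.prod_nonneg fun i _ => inv_nonneg.2 (zero_le_one.trans (hone i)))
        (inv_le_one_of_one_le₀ (hone m))
  exact anti.le_of_tendsto (multipliable_inv_realZeta_add hk).tendsto_prod_tprod_nat m

lemma invZetaProd_le_prod_Ioc (hk : 1 ≤ k) (m : ℕ) :
    invZetaProd (k + 1) ≤ ∏ j ∈ Finset.Ioc k (m + k), (realZeta j)⁻¹ := by
  rw [← Finset.Ico_add_one_add_one_eq_Ioc, Finset.prod_Ico_eq_prod_range]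
  exact invZetaProd_le_prod_range (by omega) _

lemma invZetaProd_le_one (hk : 2 ≤ k) : invZetaProd k ≤ 1 := by
  simpa using invZetaProd_le_prod_range hk 0

lemma one_sub_le_invZetaProd (hk : 2 ≤ k) : 1 - 2 * (realZeta k - 1) ≤ invZetaProd k := by
  have hnonneg (i : ℕ) : 0 ≤ realZeta (k + i) - 1 := sub_nonneg.2 (one_le_realZeta (by omega))
  refine ge_of_tendsto' (multipliable_inv_realZeta_add hk).tendsto_prod_tprod_nat fun m => ?_
  calc 1 - 2 * (realZeta k - 1)
      ≤ 1 - ∑ i ∈ Finset.range m, (realZeta (k + i) - 1) := by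
        gcongr
        exact ((summable_realZeta_add_sub_one hk).sum_le_tsum _ fun i _ => hnonneg i).trans
          (tsum_realZeta_add_sub_one_le hk)
    _ ≤ ∏ i ∈ Finset.range m, (1 + (realZeta (k + i) - 1))⁻¹ :=
        one_sub_sum_le_prod_inv_one_add _ fun i _ => hnonneg i
    _ = ∏ i ∈ Finset.range m, (realZeta (k + i))⁻¹ := by simp only [add_sub_cancel]

lemma invZetaProd_eq_inv_mul (hk : 2 ≤ k) :
    invZetaProd k = (realZeta k)⁻¹ * invZetaProd (k + 1) := by
  have hmul := multipliable_inv_realZeta_add (k := k + 1) (by omega)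
  simp only [invZetaProd, add_right_comm k 1] at hmul ⊢
  exact tprod_eq_zero_mul' hmul

lemma le_invZetaProd_succ {a : ℕ} {r r' : ℝ} (ha : 1 ≤ a) (N : ℕ)
    (h : r ≤ invZetaProd (a + 1 + 1)) (hr' : 0 ≤ r')
    (hr : r' * (∑ n ∈ Finset.range (N + 1), 1 / (n : ℝ) ^ (a + 1) + 1 / (a * (N + 1 / 2) ^ a))
      ≤ r) :
    r' ≤ invZetaProd (a + 1) := by
  have hzeta : 0 < realZeta (a + 1) := one_pos.trans_le (one_le_realZeta (by omega))
  rw [invZetaProd_eq_inv_mul (by omega), inv_mul_eq_div, le_div_iff₀ hzeta]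
  exact ((mul_le_mul_of_nonneg_left (realZeta_succ_le ha N) hr').trans hr).trans h

lemma one_sub_invZetaProd_add_le (hk : 2 ≤ k) (m : ℕ) :
    1 - invZetaProd (k + m) ≤ 2 * (realZeta k - 1) * (1 / 2) ^ m := by
  linarith [one_sub_le_invZetaProd (k := k + m) (by omega), realZeta_add_sub_one_le hk m]

lemma summable_one_sub_invZetaProd_add (hk : 2 ≤ k) :
    Summable fun m => 1 - invZetaProd (k + m) :=
  .of_nonneg_of_le (fun m => sub_nonneg.2 (invZetaProd_le_one (by omega)))
    (one_sub_invZetaProd_add_le hk) (summable_geometric_two.mul_left _)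

lemma tsum_one_sub_invZetaProd_add_le (hk : 2 ≤ k) :
    ∑' m, (1 - invZetaProd (k + m)) ≤ 4 * (realZeta k - 1) := by
  calc ∑' m, (1 - invZetaProd (k + m))
      ≤ ∑' m, 2 * (realZeta k - 1) * (1 / 2 : ℝ) ^ m :=
        (summable_one_sub_invZetaProd_add hk).tsum_le_tsum (one_sub_invZetaProd_add_le hk)
          (summable_geometric_two.mul_left _)
    _ = 4 * (realZeta k - 1) := by
        rw [tsum_mul_left, tsum_geometric_two]
        ring

lemma realZeta_twelve_le : realZeta 12 ≤ 1.0002461 := by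
  refine (realZeta_succ_le (a := 11) (by norm_num) 20).trans ?_
  norm_num [Finset.sum_range_succ]

lemma sum_range_one_sub_invZetaProd_le :
    ∑ m ∈ Finset.range 10, (1 - invZetaProd (2 + m)) ≤ 1.1175 := by
  -- Values of `∏_{j ≥ k} ζ(j)⁻¹` rounded down, by descending recursion from `k = 12`.
  have prod12 : 0.9995078 ≤ invZetaProd 12 :=
    le_trans (by linarith [realZeta_twelve_le]) (one_sub_le_invZetaProd (by norm_num))
  have prod11 : 0.999014 ≤ invZetaProd 11 :=
    le_invZetaProd_succ (by norm_num) 20 prod12 (by norm_num) (by norm_num [Finset.sum_range_succ])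
  have prod10 : 0.9980213 ≤ invZetaProd 10 :=
    le_invZetaProd_succ (by norm_num) 20 prod11 (by norm_num) (by norm_num [Finset.sum_range_succ])
  have prod9 : 0.9960208 ≤ invZetaProd 9 :=
    le_invZetaProd_succ (by norm_num) 20 prod10 (by norm_num) (by norm_num [Finset.sum_range_succ])
  have prod8 : 0.9919761 ≤ invZetaProd 8 :=
    le_invZetaProd_succ (by norm_num) 20 prod9 (by norm_num) (by norm_num [Finset.sum_range_succ])
  have prod7 : 0.9837623 ≤ invZetaProd 7 :=
    le_invZetaProd_succ (by norm_num) 20 prod8 (by norm_num) (by norm_num [Finset.sum_range_succ])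
  have prod6 : 0.9669917 ≤ invZetaProd 6 :=
    le_invZetaProd_succ (by norm_num) 20 prod7 (by norm_num) (by norm_num [Finset.sum_range_succ])
  have prod5 : 0.9325545 ≤ invZetaProd 5 :=
    le_invZetaProd_succ (by norm_num) 20 prod6 (by norm_num) (by norm_num [Finset.sum_range_succ])
  have prod4 : 0.8616228 ≤ invZetaProd 4 :=
    le_invZetaProd_succ (by norm_num) 20 prod5 (by norm_num) (by norm_num [Finset.sum_range_succ])
  have prod3 : 0.7167899 ≤ invZetaProd 3 :=
    le_invZetaProd_succ (by norm_num) 20 prod4 (by norm_num) (by norm_num [Finset.sum_range_succ])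
  have prod2 : 0.4357534 ≤ invZetaProd 2 :=
    le_invZetaProd_succ (by norm_num) 20 prod3 (by norm_num) (by norm_num [Finset.sum_range_succ])
  simp only [Finset.sum_range_succ, Finset.sum_range_zero, Nat.reduceAdd]
  linarith

lemma tsum_one_sub_invZetaProd_le : ∑' m, (1 - invZetaProd (2 + m)) ≤ 1.1185 := by
  have tail := tsum_one_sub_invZetaProd_add_le (k := 12) (by norm_num)
  rw [← (summable_one_sub_invZetaProd_add le_rfl).sum_add_tsum_nat_add 10]
  simp only [show ∀ m, 2 + (m + 10) = 12 + m by omega]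
  linarith [sum_range_one_sub_invZetaProd_le, realZeta_twelve_le]

end InvZetaProd

section SpanningTuples

variable {K W : Type*} [Field K] [Fintype K] [AddCommGroup W] [Module K W] [Module.Finite K W]
  {n : ℕ}

lemma card_span_range_eq_top (hn : Module.finrank K W ≤ n) :
    Nat.card {w : Fin n → W // Submodule.span K (Set.range w) = ⊤} =
      ∏ i : Fin (Module.finrank K W), (Fintype.card K ^ n - Fintype.card K ^ (i : ℕ)) := by
  let b := Module.finBasis K W
  -- The coordinate matrix of `w` has spanning columns iff it has independent rows.
  let e : (Fin n → W) ≃ (Fin (Module.finrank K W) → Fin n → K) :=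
    (Equiv.arrowCongr (.refl _) b.equivFun.toEquiv).trans (Equiv.piComm _)
  have span_iff (w : Fin n → W) :
      Submodule.span K (Set.range w) = ⊤ ↔ LinearIndependent K (e w) := by
    have hrange : Set.range (flip (e w)) = b.equivFun '' Set.range w := by
      rw [← Set.range_comp]
      rfl
    rw [← span_flip_eq_top_iff_linearIndependent, hrange, ← LinearEquiv.coe_toLinearMap,
      ← Submodule.map_span, Submodule.map_eq_top_iff]
  rw [Nat.card_congr (e.subtypeEquiv (q := fun s => LinearIndependent K s) span_iff),
    card_linearIndependent (by simpa using hn), Module.finrank_fin_fun]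

lemma card_span_range_eq_top_div (hn : Module.finrank K W ≤ n) :
    (Nat.card {w : Fin n → W // Submodule.span K (Set.range w) = ⊤} : ℝ) / Nat.card (Fin n → W) =
      ∏ j ∈ Finset.Ioc (n - Module.finrank K W) n, (1 - 1 / (Fintype.card K : ℝ) ^ j) := by
  set q := Fintype.card K
  set r := Module.finrank K W
  have hq : 0 < q := Fintype.card_pos
  have card_tuples : (Nat.card (Fin n → W) : ℝ) = ∏ _i ∈ Finset.range r, (q : ℝ) ^ n := by
    rw [Nat.card_fun, Nat.card_fin, Module.natCard_eq_pow_finrank (K := K) (V := W),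
      Nat.card_eq_fintype_card, Finset.prod_const, Finset.card_range]
    push_cast
    exact pow_right_comm _ _ _
  have reindex : ∏ j ∈ Finset.Ioc (n - r) n, (1 - 1 / (q : ℝ) ^ j) =
      ∏ i ∈ Finset.range r, (1 - 1 / (q : ℝ) ^ (n - i)) := by
    refine (Finset.prod_bij (fun i _ => n - i) ?_ ?_ ?_ fun _ _ => rfl).symm
    · simp only [Finset.mem_range, Finset.mem_Ioc]
      omega
    · simp only [Finset.mem_range]
      omega
    · simp only [Finset.mem_range, Finset.mem_Ioc]
      exact fun j hj => ⟨n - j, by omega, by omega⟩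
  rw [card_span_range_eq_top hn, card_tuples, reindex, Nat.cast_prod,
    ← Finset.prod_range fun i => ((q ^ n - q ^ i : ℕ) : ℝ), ← Finset.prod_div_distrib]
  refine Finset.prod_congr rfl fun i hi => ?_
  have hi : i ≤ n := (Finset.mem_range.1 hi).le.trans hn
  rw [Nat.cast_sub (Nat.pow_le_pow_right hq hi), Nat.cast_pow, Nat.cast_pow, sub_div,
    div_self (by positivity), pow_sub₀ _ (by positivity) hi]
  field_simp

end SpanningTuples

section CoprimeImages

variable {G : Type*} [Group G]

lemma card_preimage_eq_card_mul_card_ker {H : Type*} [Group H] {f : G →* H}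
    (hf : Function.Surjective f) (S : Set H) :
    Nat.card (f ⁻¹' S) = Nat.card S * Nat.card f.ker := by
  let e : f ⁻¹' S ≃ S × f.ker :=
    (Equiv.sigmaSubtypeFiberEquivSubtype f fun _ => Iff.rfl).symm.trans
      ((Equiv.sigmaCongrRight fun y : S => MonoidHom.fiberEquivKerOfSurjective hf y).trans
        (Equiv.sigmaEquivProd _ _))
  rw [Nat.card_congr e, Nat.card_prod]

lemma card_preimage_div_card [Finite G] {H : Type*} [Group H] {f : G →* H}
    (hf : Function.Surjective f) (S : Set H) :
    (Nat.card (f ⁻¹' S) : ℝ) / Nat.card G = Nat.card S / Nat.card H := by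
  have card_eq : Nat.card G = Nat.card H * Nat.card f.ker := by
    simpa using card_preimage_eq_card_mul_card_ker hf Set.univ
  have ker_pos : (Nat.card f.ker : ℝ) ≠ 0 := by exact_mod_cast Nat.card_pos.ne'
  rw [card_preimage_eq_card_mul_card_ker hf, card_eq, Nat.cast_mul, Nat.cast_mul,
    mul_div_mul_right _ _ ker_pos]

variable [Finite G] {ι : Type*} {A : ι → Type*} [∀ i, Group (A i)]
  {φ : ∀ i, G →* A i}

lemma surjective_monoidHom_pi_of_coprime [Finite ι] (hφ : ∀ i, Function.Surjective (φ i))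
    (hA : Pairwise fun i j => (Nat.card (A i)).Coprime (Nat.card (A j))) :
    Function.Surjective (MonoidHom.pi φ) := by
  have := Fintype.ofFinite ι
  have (i : ι) : Finite (A i) := .of_surjective _ (hφ i)
  have card_dvd (i : ι) : Nat.card (A i) ∣ Nat.card (MonoidHom.pi φ).range := by
    refine Subgroup.card_dvd_of_surjective
      ((Pi.evalMonoidHom A i).comp (MonoidHom.pi φ).range.subtype) fun a => ?_
    obtain ⟨g, hg⟩ := hφ i a
    exact ⟨⟨MonoidHom.pi φ g, g, rfl⟩, hg⟩
  have prod_dvd : ∏ i, Nat.card (A i) ∣ Nat.card (MonoidHom.pi φ).range :=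
    Finset.prod_dvd_of_isRelPrime (fun i _ j _ hij => Nat.coprime_iff_isRelPrime.1 (hA hij))
      fun i _ => card_dvd i
  rw [← Nat.card_pi] at prod_dvd
  exact MonoidHom.range_eq_top.1
    (Subgroup.eq_top_of_le_card _ (Nat.le_of_dvd Nat.card_pos prod_dvd))

lemma card_forall_mem_div_card [Fintype ι] (hφ : ∀ i, Function.Surjective (φ i))
    (hA : Pairwise fun i j => (Nat.card (A i)).Coprime (Nat.card (A j))) (T : ∀ i, Set (A i)) :
    (Nat.card {x // ∀ i, φ i x ∈ T i} : ℝ) / Nat.card G =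
      ∏ i, (Nat.card (T i) : ℝ) / Nat.card (A i) := by
  have h := card_preimage_div_card (surjective_monoidHom_pi_of_coprime hφ hA) (Set.univ.pi T)
  rw [Nat.card_congr (Equiv.Set.univPi T), Nat.card_pi, Nat.card_pi, Nat.cast_prod, Nat.cast_prod,
    ← Finset.prod_div_distrib] at h
  rw [← h]
  simp only [Set.preimage, Set.mem_univ_pi, MonoidHom.pi_apply, Set.coe_ofPred]

end CoprimeImages

section GenProb

variable {G : Type*} [Group G] {n : ℕ}

lemma dMin_le_card {S : Finset G} (hS : closure (S : Set G) = ⊤) : dMin G ≤ S.card :=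
  Nat.sInf_le ⟨S, rfl, hS⟩

lemma genProb_nonneg {Y : Set G} : 0 ≤ genProb G Y n := by
  unfold genProb
  positivity

lemma genProb_eq_zero_of_card_add_lt_dMin {Y : Finset G} (hY : Y.card + n < dMin G) :
    genProb G Y n = 0 := by
  classical
  have : IsEmpty {v : Fin n → G // closure (↑Y ∪ Set.range v) = ⊤} := by
    refine ⟨fun ⟨v, hv⟩ => hY.not_ge ?_⟩
    calc dMin G ≤ (Y ∪ Finset.univ.image v).card := dMin_le_card (by simpa using hv)
      _ ≤ Y.card + (Finset.univ.image v).card := Finset.card_union_le _ _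
      _ ≤ Y.card + n := by
        gcongr
        exact Finset.card_image_le.trans_eq (Finset.card_fin n)
  rw [genProb, Nat.card_of_isEmpty, Nat.cast_zero, zero_div]

variable [Finite G] {Y : Set G}

lemma exists_card_eq_dMin : ∃ S : Finset G, S.card = dMin G ∧ closure (S : Set G) = ⊤ := by
  have := Fintype.ofFinite G
  exact Nat.sInf_mem (s := {n | ∃ S : Finset G, S.card = n ∧ closure (S : Set G) = ⊤})
    ⟨_, Finset.univ, rfl, by simp⟩

lemma genProb_mono {Z : Set G} (hYZ : Y ⊆ Z) : genProb G Y n ≤ genProb G Z n := by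
  unfold genProb
  gcongr
  refine Nat.card_le_card_of_injective (Subtype.map id fun v hv => top_unique ?_)
    (Subtype.map_injective _ Function.injective_id)
  exact hv.ge.trans (closure_mono (Set.union_subset_union_left _ hYZ))

lemma genProb_le_one : genProb G Y n ≤ 1 := by
  rw [genProb, ← Nat.cast_pow, ← Nat.card_fin n, ← Nat.card_fun, Nat.card_fin]
  exact div_le_one_of_le₀ (by exact_mod_cast Nat.card_le_card_of_injective _ Subtype.val_injective)
    (Nat.cast_nonneg _)

lemma summable_one_sub_genProb {t : ℕ → ℝ} (ht : Summable t) {m : ℕ}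
    (h : ∀ k, 1 - genProb G Y (k + m) ≤ t k) : Summable fun n => 1 - genProb G Y n :=
  (summable_nat_add_iff m).1 (.of_nonneg_of_le (fun _ => sub_nonneg.2 genProb_le_one) h ht)

lemma eTime_le_add_tsum {t : ℕ → ℝ} (ht : Summable t) {m : ℕ}
    (h : ∀ k, 1 - genProb G Y (k + m) ≤ t k) : eTime G Y ≤ m + ∑' k, t k := by
  have hsum := summable_one_sub_genProb ht h
  rw [eTime, ← hsum.sum_add_tsum_nat_add m]
  gcongr
  · calc ∑ n ∈ Finset.range m, (1 - genProb G Y n)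
        ≤ ∑ _n ∈ Finset.range m, 1 := by
          gcongr
          exact sub_le_self _ genProb_nonneg
      _ = (m : ℝ) := by simp
  · exact (summable_nat_add_iff m).2 hsum
  · exact h _

lemma dMin_le_card_add_eTime {Y : Finset G} (hsum : Summable fun n => 1 - genProb G Y n) :
    (dMin G : ℝ) ≤ Y.card + eTime G Y := by
  have initial : ∑ n ∈ Finset.range (dMin G - Y.card), (1 - genProb G Y n) ≤ eTime G Y :=
    hsum.sum_le_tsum _ fun _ _ => sub_nonneg.2 genProb_le_one
  have initial_eq :
      ∑ n ∈ Finset.range (dMin G - Y.card), (1 - genProb G Y n) = (dMin G - Y.card : ℕ) := by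
    have one (n) (hn : n ∈ Finset.range (dMin G - Y.card)) : 1 - genProb G Y n = 1 := by
      rw [genProb_eq_zero_of_card_add_lt_dMin (by have := Finset.mem_range.1 hn; omega), sub_zero]
    rw [Finset.sum_congr rfl one]
    simp
  have : (dMin G : ℝ) ≤ Y.card + (dMin G - Y.card : ℕ) := by exact_mod_cast le_add_tsub
  linarith

end GenProb

section ModularHoms

variable (G : Type*) [Group G] (p : ℕ)

/-- The space `Hom(G, 𝔽_p)`; `Additive G` need not be commutative here. Its dimension is the rank
of the largest elementary abelian `p`-quotient of `G`. -/
abbrev ModularHom : Type _ := Additive G →+ ZMod p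

/-- The largest elementary abelian `p`-quotient of a finite group `G`, realised as the dual of
`Hom(G, 𝔽_p)` and written multiplicatively to receive homomorphisms from `G`. -/
abbrev ModularQuotient : Type _ := Multiplicative (Module.Dual (ZMod p) (ModularHom G p))

/-- The quotient map of `G` onto `ModularQuotient G p`: evaluation of the homomorphisms
`G → 𝔽_p` at the elements of `G`. -/
def modularEval : G →* ModularQuotient G p :=
  MonoidHom.mk'
    (fun g => .ofAdd
      { toFun h := h (.ofMul g)
        map_add' _ _ := rfl
        map_smul' _ _ := rfl })
    fun a b => Multiplicative.toAdd.injective <|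
      LinearMap.ext fun h => map_add h (.ofMul a) (.ofMul b)

variable {G p}

lemma eq_zero_of_closure_eq_top {S : Set G} (hS : closure S = ⊤) {h : ModularHom G p}
    (h0 : ∀ s ∈ S, h (.ofMul s) = 0) : h = 0 := by
  have hker : S ⊆ h.toMultiplicativeRight.ker := h0
  rw [← closure_le, hS] at hker
  exact AddMonoidHom.ext fun g => hker (mem_top g.toMul)

variable [Finite G] [Fact p.Prime]

instance : Finite (ModularHom G p) := DFunLike.finite _

lemma card_modularQuotient :
    Nat.card (ModularQuotient G p) = p ^ Module.finrank (ZMod p) (ModularHom G p) := by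
  rw [Nat.card_congr Multiplicative.toAdd, Module.natCard_eq_pow_finrank (K := ZMod p),
    Nat.card_zmod, Subspace.dual_finrank_eq]

lemma surjective_modularEval : Function.Surjective (modularEval G p) := by
  let R : Submodule (ZMod p) (Module.Dual (ZMod p) (ModularHom G p)) :=
    AddSubgroup.toZModSubmodule p (modularEval G p).toAdditiveLeft.range
  have coann : R.dualCoannihilator = ⊥ := by
    rw [Submodule.eq_bot_iff]
    intro h hh
    ext g
    exact (Submodule.mem_dualCoannihilator h).1 hh _ ⟨g, rfl⟩
  have hR : R = ⊤ := by
    rw [← Subspace.dualCoannihilator_dualAnnihilator_eq (W := R), coann,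
      Submodule.dualAnnihilator_bot]
  intro y
  obtain ⟨g, hg⟩ : y.toAdd ∈ R := hR ▸ Submodule.mem_top
  exact ⟨g.toMul, hg⟩

lemma finrank_modularHom_le_dMin : Module.finrank (ZMod p) (ModularHom G p) ≤ dMin G := by
  obtain ⟨S, hcard, hS⟩ := exists_card_eq_dMin (G := G)
  let restrict : ModularHom G p →ₗ[ZMod p] S → ZMod p :=
    { toFun h s := h (.ofMul s.1)
      map_add' _ _ := rfl
      map_smul' _ _ := rfl }
  have restrict_injective : Function.Injective restrict :=
    (injective_iff_map_eq_zero restrict).2 fun h h0 =>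
      eq_zero_of_closure_eq_top hS fun s hs => congrFun h0 ⟨s, hs⟩
  simpa [hcard] using LinearMap.finrank_le_finrank_of_injective restrict_injective

end ModularHoms

section Nilpotent

variable {G : Type*} [Group G]

lemma isSimpleGroup_quotient_of_isCoatom {M : Subgroup G} [M.Normal] (hM : IsCoatom M) :
    IsSimpleGroup (G ⧸ M) := by
  have : IsSimpleOrder (Set.Ici M) := Set.isSimpleOrder_Ici_iff_isCoatom.2 hM
  have : IsSimpleOrder (Subgroup (G ⧸ M)) :=
    OrderIso.isSimpleOrder (β := Set.Ici M) (QuotientGroup.comapMk'OrderIso M)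
  have : Nontrivial (G ⧸ M) := Subgroup.nontrivial_iff.1 inferInstance
  exact ⟨fun H _ => eq_bot_or_eq_top H⟩

variable [Finite G] [Group.IsNilpotent G]

lemma exists_modularHom_ne_zero_of_ne_top {H : Subgroup G} (hH : H ≠ ⊤) :
    ∃ p ∈ (Nat.card G).primeFactors, ∃ h : ModularHom G p, h ≠ 0 ∧ ∀ g ∈ H, h (.ofMul g) = 0 := by
  obtain ⟨M, hM, hHM⟩ := (eq_top_or_exists_le_coatom H).resolve_left hH
  have : M.Normal :=
    NormalizerCondition.normal_of_coatom M Group.normalizerCondition_of_isNilpotent hM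
  have : IsSimpleGroup (G ⧸ M) := isSimpleGroup_quotient_of_isCoatom hM
  obtain ⟨p, hp, ⟨e⟩⟩ := exists_prime_addEquiv_ZMod (G := G ⧸ M)
  have hcard : Nat.card (G ⧸ M) = p := (Nat.card_congr e.toEquiv).trans (Nat.card_zmod p)
  refine ⟨p, Nat.mem_primeFactors.2 ⟨hp, hcard ▸ M.card_quotient_dvd_card, Nat.card_pos.ne'⟩,
    e.toAddMonoidHom.comp (QuotientGroup.mk' M).toAdditive, fun h0 => ?_, fun g hg => ?_⟩
  · obtain ⟨x, hx⟩ := exists_ne (1 : G ⧸ M)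
    obtain ⟨g, rfl⟩ := QuotientGroup.mk'_surjective M x
    exact hx (e.map_eq_zero_iff.1 (DFunLike.congr_fun h0 (Additive.ofMul g)))
  · exact e.map_eq_zero_iff.2 ((QuotientGroup.eq_one_iff g).2 (hHM hg))

lemma closure_range_eq_top_of_span_modularEval {ι : Type*} {v : ι → G}
    (hv : ∀ p ∈ (Nat.card G).primeFactors,
      Submodule.span (ZMod p) (Set.range fun j => (modularEval G p (v j)).toAdd) = ⊤) :
    closure (Set.range v) = ⊤ := by
  by_contra hne
  obtain ⟨p, hp, h, hh, vanish⟩ := exists_modularHom_ne_zero_of_ne_top hne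
  have : Fact p.Prime := ⟨Nat.prime_of_mem_primeFactors hp⟩
  have span_le : Submodule.span (ZMod p) (Set.range fun j => (modularEval G p (v j)).toAdd) ≤
      LinearMap.ker (Module.Dual.eval (ZMod p) _ h) := by
    rw [Submodule.span_le]
    rintro _ ⟨j, rfl⟩
    exact vanish _ (subset_closure ⟨j, rfl⟩)
  rw [hv p hp] at span_le
  exact hh ((Module.forall_dual_apply_eq_zero_iff _ h).1 fun φ =>
    span_le (Submodule.mem_top (x := φ)))

lemma prod_one_sub_le_genProb {n : ℕ} (hn : dMin G ≤ n) :
    ∏ p ∈ (Nat.card G).primeFactors,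
        ∏ j ∈ Finset.Ioc (n - Module.finrank (ZMod p) (ModularHom G p)) n, (1 - 1 / (p : ℝ) ^ j) ≤
      genProb G ∅ n := by
  have hprime (p : (Nat.card G).primeFactors) : Fact (p : ℕ).Prime :=
    ⟨Nat.prime_of_mem_primeFactors p.2⟩
  let φ (p : (Nat.card G).primeFactors) := (modularEval G p).compLeft (Fin n)
  let T (p : (Nat.card G).primeFactors) :
      Set (Fin n → ModularQuotient G p) :=
    {w | Submodule.span (ZMod p) (Set.range fun j => (w j).toAdd) = ⊤}
  have hφ (p) : Function.Surjective (φ p) := surjective_modularEval.comp_left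
  have hcoprime : Pairwise fun p q : (Nat.card G).primeFactors =>
      (Nat.card (Fin n → ModularQuotient G p)).Coprime
        (Nat.card (Fin n → ModularQuotient G q)) := by
    intro p q hpq
    rw [Nat.card_fun, Nat.card_fun, Nat.card_fin, card_modularQuotient, card_modularQuotient]
    exact (((Nat.coprime_primes (hprime p).1 (hprime q).1).2
      (Subtype.coe_ne_coe.2 hpq)).pow _ _).pow _ _
  have factor_eq (p : (Nat.card G).primeFactors) :
      ∏ j ∈ Finset.Ioc (n - Module.finrank (ZMod p) (ModularHom G p)) n, (1 - 1 / (p : ℝ) ^ j) =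
        (Nat.card (T p) : ℝ) / Nat.card (Fin n → ModularQuotient G p) := by
    have h := card_span_range_eq_top_div (K := ZMod p)
      (W := Module.Dual (ZMod p) (ModularHom G p)) (n := n)
      (by simpa using finrank_modularHom_le_dMin.trans hn)
    rw [ZMod.card, Subspace.dual_finrank_eq] at h
    exact h.symm
  calc _ = ∏ p : (Nat.card G).primeFactors,
          (Nat.card (T p) : ℝ) / Nat.card (Fin n → ModularQuotient G p) := by
        rw [← Finset.prod_coe_sort]
        exact Finset.prod_congr rfl fun p _ => factor_eq p
    _ = (Nat.card {v // ∀ p, φ p v ∈ T p} : ℝ) / Nat.card (Fin n → G) :=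
        (card_forall_mem_div_card hφ hcoprime T).symm
    _ ≤ genProb G ∅ n := by
        rw [genProb, Nat.card_fun, Nat.card_fin, Nat.cast_pow]
        simp only [Set.empty_union]
        gcongr
        refine Nat.card_le_card_of_injective (Subtype.map id fun v hv => ?_)
          (Subtype.map_injective _ Function.injective_id)
        exact closure_range_eq_top_of_span_modularEval fun p hp => hv ⟨p, hp⟩

lemma prod_Ioc_one_sub_le_genProb {k : ℕ} :
    ∏ p ∈ (Nat.card G).primeFactors, ∏ j ∈ Finset.Ioc k (dMin G + k), (1 - 1 / (p : ℝ) ^ j) ≤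
      genProb G ∅ (dMin G + k) := by
  have factor_mem {p : ℕ} (hp : p ∈ (Nat.card G).primeFactors) (j : ℕ) :
      0 ≤ 1 - 1 / (p : ℝ) ^ j ∧ 1 - 1 / (p : ℝ) ^ j ≤ 1 := by
    have hp1 : (1 : ℝ) ≤ p := by exact_mod_cast (Nat.prime_of_mem_primeFactors hp).one_le
    exact ⟨sub_nonneg.2 (div_le_one_of_le₀ (one_le_pow₀ hp1) (by positivity)),
      sub_le_self _ (by positivity)⟩
  refine (Finset.prod_le_prod (fun p hp => Finset.prod_nonneg fun j _ => (factor_mem hp j).1)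
    fun p hp => ?_).trans (prod_one_sub_le_genProb (Nat.le_add_right _ k))
  have : Fact p.Prime := ⟨Nat.prime_of_mem_primeFactors hp⟩
  have hrank : Module.finrank (ZMod p) (ModularHom G p) ≤ dMin G := finrank_modularHom_le_dMin
  exact Finset.prod_le_prod_of_subset_of_le_one
    (Finset.Ioc_subset_Ioc_left (by omega)) (fun j _ => (factor_mem hp j).1)
    fun j _ _ => (factor_mem hp j).2

lemma invZetaProd_le_genProb {k : ℕ} (hk : 1 ≤ k) :
    invZetaProd (k + 1) ≤ genProb G ∅ (dMin G + k) := by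
  calc invZetaProd (k + 1)
      ≤ ∏ j ∈ Finset.Ioc k (dMin G + k), (realZeta j)⁻¹ := invZetaProd_le_prod_Ioc hk _
    _ ≤ ∏ j ∈ Finset.Ioc k (dMin G + k),
          ∏ p ∈ (Nat.card G).primeFactors, (1 - 1 / (p : ℝ) ^ j) := by
        have two_le {j : ℕ} (hj : j ∈ Finset.Ioc k (dMin G + k)) : 2 ≤ j := by
          have := Finset.mem_Ioc.1 hj
          omega
        exact Finset.prod_le_prod
          (fun j hj => inv_nonneg.2 (zero_le_one.trans (one_le_realZeta (two_le hj))))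
          fun j hj => inv_realZeta_le_prod_one_sub (fun _ => Nat.prime_of_mem_primeFactors)
            (two_le hj)
    _ = ∏ p ∈ (Nat.card G).primeFactors,
          ∏ j ∈ Finset.Ioc k (dMin G + k), (1 - 1 / (p : ℝ) ^ j) := Finset.prod_comm
    _ ≤ genProb G ∅ (dMin G + k) := prod_Ioc_one_sub_le_genProb

lemma one_sub_genProb_le (Y : Set G) (m : ℕ) :
    1 - genProb G Y (m + (dMin G + 1)) ≤ 1 - invZetaProd (2 + m) := by
  have h := (invZetaProd_le_genProb (G := G) (k := m + 1) (by omega)).trans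
    (genProb_mono (Set.empty_subset Y))
  rw [show 2 + m = m + 1 + 1 by omega, show m + (dMin G + 1) = dMin G + (m + 1) by omega]
  linarith

end Nilpotent

/-- For a finite nilpotent group `G`, `e(G) ≤ d(G) + 2.1185`; consequently
`e(G) - e(G,g) ≤ 3.1185` for every `g ∈ G`. -/
theorem stmt13 (G : Type*) [Group G] [Finite G] [Group.IsNilpotent G] :
    eTime G ∅ ≤ (dMin G : ℝ) + 2.1185 ∧
      ∀ g : G, eTime G ∅ - eTime G {g} ≤ 3.1185 := by
  have htail : Summable fun m => 1 - invZetaProd (2 + m) := summable_one_sub_invZetaProd_add le_rfl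
  have upper : eTime G ∅ ≤ dMin G + 2.1185 := by
    have h := eTime_le_add_tsum htail (one_sub_genProb_le (∅ : Set G))
    push_cast at h
    linarith [tsum_one_sub_invZetaProd_le]
  refine ⟨upper, fun g => ?_⟩
  have lower : (dMin G : ℝ) ≤ 1 + eTime G {g} := by
    simpa using dMin_le_card_add_eTime (Y := {g})
      (summable_one_sub_genProb htail (one_sub_genProb_le _))
  linarith
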